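/- Consider the inverted pendulum cart on a seesaw: mass matrix on ℝ³ given by g₁₁ = b + (x³)², g₁₂ = a x³ sin(x¹ − x²), g₁₃ = 0, g₂₂ = 1, g₂₃ = −a cos(x¹ − x²), g₃₃ = 1, with parameters a, b > 0. Let U ⊆ {x ∈ ℝ³ : sin(x¹ − x²) ≠ 0 and x³ ≠ 0} be open. A smooth λ = (λ¹,λ²,λ³) : U → ℝ³ satisfies the λ-equations ∂(g_{1i}λ^i)/∂x^k − 2[k1,i]λ^i = 0 (k = 1,2,3) if and only if the function ν := g_{1i}λ^i satisfies ∂ν/∂x² = 0 and: λ¹ = (2ν − x³ ∂ν/∂x³)/(2b), λ² = (−2x³ ν + (b + (x³)²) ∂ν/∂x³)/(2ab sin(x¹ − x²)), and λ³ = a cos(x¹ − x²) λ² − (∂ν/∂x¹)/(2x³). -/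

import Mathlib

/-- Partial derivative in the `k`-th coordinate direction. -/
noncomputable def pd {n : ℕ} (k : Fin n) (f : (Fin n → ℝ) → ℝ) (x : Fin n → ℝ) : ℝ :=
  fderiv ℝ f x (Pi.single k 1)

/-- Christoffel symbol of the first kind `[ij,k]` of the matrix-valued map `g`. -/
noncomputable def chr {n : ℕ} (g : (Fin n → ℝ) → Matrix (Fin n) (Fin n) ℝ)
    (i j k : Fin n) (x : Fin n → ℝ) : ℝ :=
  (1/2) * (pd i (fun y => g y j k) x + pd j (fun y => g y i k) x - pd k (fun y => g y i j) x)

/-- Mass matrix of the inverted pendulum cart on a seesaw. -/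
noncomputable def gSeesaw (a b : ℝ) (x : Fin 3 → ℝ) : Matrix (Fin 3) (Fin 3) ℝ :=
  !![b + (x 2)^2, a * x 2 * Real.sin (x 0 - x 1), 0;
     a * x 2 * Real.sin (x 0 - x 1), 1, -a * Real.cos (x 0 - x 1);
     0, -a * Real.cos (x 0 - x 1), 1]

/-- `ν = g_{1i} λ^i` for the seesaw system. -/
noncomputable def nuSeesaw (a b : ℝ) (lam : (Fin 3 → ℝ) → Fin 3 → ℝ)
    (x : Fin 3 → ℝ) : ℝ :=
  ∑ i, gSeesaw a b x 0 i * lam x i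


theorem pd_const (k : Fin 3) (c : ℝ) (x : Fin 3 → ℝ) : pd k (fun _ => c) x = 0 := by
  simp [pd]

theorem pd_sq (k : Fin 3) (b : ℝ) (x : Fin 3 → ℝ) :
    pd k (fun y => b + (y 2)^2) x = 2 * x 2 * (Pi.single k 1 : Fin 3 → ℝ) 2 := by
  have h2 := hasFDerivAt_apply (𝕜 := ℝ) (F' := fun _ : Fin 3 => ℝ) (2 : Fin 3) x
  have h := (h2.pow 2).const_add b
  have e := h.fderiv
  unfold pd
  erw [e]
  simp

theorem pd_sin (k : Fin 3) (a : ℝ) (x : Fin 3 → ℝ) :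
    pd k (fun y => a * y 2 * Real.sin (y 0 - y 1)) x
      = a * Real.sin (x 0 - x 1) * (Pi.single k 1 : Fin 3 → ℝ) 2
        + a * x 2 * Real.cos (x 0 - x 1)
          * ((Pi.single k 1 : Fin 3 → ℝ) 0 - (Pi.single k 1 : Fin 3 → ℝ) 1) := by
  have h (i : Fin 3) := hasFDerivAt_apply (𝕜 := ℝ) (F' := fun _ : Fin 3 => ℝ) i x
  have e := (((h 2).const_mul a).mul ((h 0).sub (h 1)).sin).fderiv
  unfold pd
  erw [e]
  simp
  ring

theorem pd_cos (k : Fin 3) (a : ℝ) (x : Fin 3 → ℝ) :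
    pd k (fun y => -a * Real.cos (y 0 - y 1)) x
      = a * Real.sin (x 0 - x 1)
          * ((Pi.single k 1 : Fin 3 → ℝ) 0 - (Pi.single k 1 : Fin 3 → ℝ) 1) := by
  have h (i : Fin 3) := hasFDerivAt_apply (𝕜 := ℝ) (F' := fun _ : Fin 3 => ℝ) i x
  have e := (((h 0).sub (h 1)).cos.const_mul (-a)).fderiv
  unfold pd
  erw [e]
  simp
  ring

/-- Characterization of all solutions to the λ-equations for the inverted
pendulum cart on a seesaw, away from `sin(x¹−x²) = 0` and `x³ = 0`. -/
theorem seesaw_lambda_characterization (a b : ℝ) (ha : 0 < a) (hb : 0 < b)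
    (U : Set (Fin 3 → ℝ)) (hUopen : IsOpen U)
    (hU : U ⊆ {x : Fin 3 → ℝ | Real.sin (x 0 - x 1) ≠ 0 ∧ x 2 ≠ 0})
    (lam : (Fin 3 → ℝ) → Fin 3 → ℝ)
    (hlam : ∀ i, ContDiffOn ℝ (⊤ : ℕ∞) (fun x => lam x i) U) :
    -- λ satisfies the λ-equations on U …
    (∀ x ∈ U, ∀ k : Fin 3,
        pd k (fun y => ∑ i, gSeesaw a b y 0 i * lam y i) x
          - 2 * ∑ i, chr (gSeesaw a b) k 0 i x * lam x i = 0)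
    ↔
    -- … iff ∂ν/∂x² = 0 and the explicit formulas for λ¹, λ², λ³ hold
    (∀ x ∈ U,
        pd 1 (nuSeesaw a b lam) x = 0 ∧
        lam x 0 = (2 * nuSeesaw a b lam x - x 2 * pd 2 (nuSeesaw a b lam) x) / (2 * b) ∧
        lam x 1 = (-2 * x 2 * nuSeesaw a b lam x
            + (b + (x 2)^2) * pd 2 (nuSeesaw a b lam) x)
            / (2 * a * b * Real.sin (x 0 - x 1)) ∧
        lam x 2 = a * Real.cos (x 0 - x 1) * lam x 1
            - pd 0 (nuSeesaw a b lam) x / (2 * x 2)) := by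
  apply forall₂_congr
  intro x hx
  obtain ⟨hs, h2⟩ := hU hx
  change (∀ k : Fin 3, pd k (nuSeesaw a b lam) x
    - 2 * ∑ i, chr (gSeesaw a b) k 0 i x * lam x i = 0) ↔ _
  have hν : nuSeesaw a b lam x
      = (b + (x 2)^2) * lam x 0 + a * x 2 * Real.sin (x 0 - x 1) * lam x 1 := by
    simp [nuSeesaw, gSeesaw, Fin.sum_univ_three]
  have c0 : 2 * ∑ i, chr (gSeesaw a b) 0 0 i x * lam x i
      = 2 * a * x 2 * Real.cos (x 0 - x 1) * lam x 1 - 2 * x 2 * lam x 2 := by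
    simp only [chr, gSeesaw, Fin.sum_univ_three, Matrix.of_apply, Matrix.cons_val', Matrix.cons_val,
      Matrix.cons_val_zero, Matrix.cons_val_one, pd_const, pd_sq, pd_sin, pd_cos]
    simp
    ring
  have c1 : 2 * ∑ i, chr (gSeesaw a b) 1 0 i x * lam x i = 0 := by
    simp only [chr, gSeesaw, Fin.sum_univ_three, Matrix.of_apply, Matrix.cons_val', Matrix.cons_val,
      Matrix.cons_val_zero, Matrix.cons_val_one, pd_const, pd_sq, pd_sin, pd_cos]
    simp
  have c2 : 2 * ∑ i, chr (gSeesaw a b) 2 0 i x * lam x i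
      = 2 * x 2 * lam x 0 + 2 * a * Real.sin (x 0 - x 1) * lam x 1 := by
    simp only [chr, gSeesaw, Fin.sum_univ_three, Matrix.of_apply, Matrix.cons_val', Matrix.cons_val,
      Matrix.cons_val_zero, Matrix.cons_val_one, pd_const, pd_sq, pd_sin, pd_cos]
    simp
    ring
  rw [Fin.forall_fin_succ, Fin.forall_fin_succ, Fin.forall_fin_succ]
  change (_ ∧ pd 1 (nuSeesaw a b lam) x
    - 2 * ∑ i, chr (gSeesaw a b) 1 0 i x * lam x i = 0 ∧ pd 2 (nuSeesaw a b lam) x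
    - 2 * ∑ i, chr (gSeesaw a b) 2 0 i x * lam x i = 0 ∧ _) ↔ _
  rw [c0, c1, c2, hν]
  generalize pd 0 (nuSeesaw a b lam) x = p0
  generalize pd 1 (nuSeesaw a b lam) x = p1
  generalize pd 2 (nuSeesaw a b lam) x = p2
  generalize Real.sin (x 0 - x 1) = s at *
  generalize Real.cos (x 0 - x 1) = c at *
  generalize lam x 0 = l0
  generalize lam x 1 = l1
  generalize lam x 2 = l2
  generalize x 2 = z at *
  have hb' := hb.ne'
  have ha' := ha.ne'
  constructor
  · rintro ⟨e0, e1, e2, -⟩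
    have e0' : p0 = 2 * a * z * c * l1 - 2 * z * l2 := by linarith
    have e2' : p2 = 2 * z * l0 + 2 * a * s * l1 := by linarith
    subst e0' e2'
    refine ⟨by linarith, ?_, ?_, ?_⟩
    · field_simp
      ring
    · field_simp
      ring
    · field_simp
      ring
  · rintro ⟨e1, f0, f1, f2⟩
    rw [eq_div_iff (by positivity)] at f0
    refine ⟨?_, by linarith, ?_, fun i => i.elim0⟩
    · rw [f2]
      field_simp
      ring
    · have : z * (p2 - (2 * z * l0 + 2 * a * s * l1)) = 0 := by linarith
      exact (mul_eq_zero.mp this).resolve_left h2
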